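/- There exists a constant A₀ > 0, depending only on n and a_1,…,a_{n-1}, such that for every real number A ≥ A₀ and every finite set S of integers, each distinct from a_1,…,a_{n-1} and satisfying A ≤ |a| ≤ 2A for all a ∈ S, if the number fields K_a for a ∈ S are pairwise isomorphic, then |S| ≤ n(n−1)(n−2). -/

import Mathlib

open Polynomial

/-- The Ankeny–Brauer–Chowla polynomial
`f_a(x) = (x−a_1)⋯(x−a_{n-1})(x−a) − 1 ∈ ℤ[x]`. -/
noncomputable def abcPolyZ (n : ℕ) (a : Fin (n - 1) → ℤ) (b : ℤ) : Polynomial ℤ :=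
  (∏ i, (X - C (a i))) * (X - C b) - 1

/-- The Ankeny–Brauer–Chowla polynomial viewed in `ℚ[x]`. -/
noncomputable def abcPolyQ (n : ℕ) (a : Fin (n - 1) → ℤ) (b : ℤ) : Polynomial ℚ :=
  (abcPolyZ n a b).map (Int.castRingHom ℚ)

open NumberField

/-!
If `ξ` is a root of `f_b`, then `ξ - b` and all `ξ - a i` are units of the ring of integers, so
their conjugates multiply to `±1`. For large `b` this forces exactly one conjugate of `ξ` to lie
near each of `b, a_1, …, a_{n-1}`, the one near `a i` being within `O(1 / |b|)` of it. When all the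
fields coincide with one field `K`, record for each `b` which three embeddings of `K` send its root
near `b`, `a i` and `a j`, for two fixed indices `i ≠ j`; there are `n (n - 1) (n - 2)` such
records. If two roots `ξ ≠ ξ'` shared a record, the norm of `ξ - ξ'` would have one conjugate of
size `O(|b| + |b'|)`, two of size `O(1 / A)` and the others bounded, and so would be less than `1`
in absolute value, as long as `|b|` and `|b'|` are small compared with `A ^ 2`.
-/

section Products

variable {ι : Type*} [Fintype ι] {f : ι → ℝ}

theorem mul_pow_card_sub_one_le_prod {c : ℝ} (hc : 0 ≤ c) {i : ι} (hi : 0 ≤ f i)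
    (hf : ∀ j ≠ i, c ≤ f j) : f i * c ^ (Fintype.card ι - 1) ≤ ∏ j, f j := by
  classical
  have hcompl : c ^ (Fintype.card ι - 1) ≤ ∏ j ∈ {i}ᶜ, f j := by
    rw [← Finset.card_singleton i, ← Finset.card_compl, ← Finset.prod_const]
    exact Finset.prod_le_prod (fun _ _ ↦ hc) fun j hj ↦ hf j (by simpa using hj)
  rw [Fintype.prod_eq_mul_prod_compl i]
  exact mul_le_mul_of_nonneg_left hcompl hi

theorem prod_le_sq_mul_pow_card_sub_two (hf : ∀ k, 0 ≤ f k) {i j : ι} (hij : i ≠ j) {c C : ℝ}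
    (hi : f i ≤ c) (hj : f j ≤ c) (hC : ∀ k, f k ≤ C) :
    ∏ k, f k ≤ c ^ 2 * C ^ (Fintype.card ι - 2) := by
  classical
  have hpair : ∏ k ∈ {i, j}, f k ≤ c ^ 2 := by
    rw [Finset.prod_pair hij, sq]
    exact mul_le_mul hi hj (hf j) ((hf i).trans hi)
  have hcompl : ∏ k ∈ {i, j}ᶜ, f k ≤ C ^ (Fintype.card ι - 2) := by
    rw [← Finset.card_pair hij, ← Finset.card_compl, ← Finset.prod_const]
    exact Finset.prod_le_prod (fun k _ ↦ hf k) fun k _ ↦ hC k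
  rw [← Finset.prod_mul_prod_compl {i, j}]
  exact mul_le_mul hpair hcompl (Finset.prod_nonneg fun k _ ↦ hf k) (sq_nonneg c)

theorem exists_le_one_of_prod_le_one [Nonempty ι] (hf : ∏ i, f i ≤ 1) : ∃ i, f i ≤ 1 := by
  by_contra! hlt
  have : ∏ _i : ι, (1 : ℝ) < ∏ i, f i :=
    Finset.prod_lt_prod_of_nonempty (fun _ _ ↦ one_pos) (fun i _ ↦ hlt i) Finset.univ_nonempty
  rw [Finset.prod_const_one] at this
  exact hf.not_gt this

end Products

theorem abs_intCast_sub_le_norm_add_norm (z : ℂ) (k l : ℤ) :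
    |(k : ℝ) - l| ≤ ‖z - k‖ + ‖z - l‖ := by
  calc |(k : ℝ) - l| = ‖(z - l) - (z - k)‖ := by
        rw [sub_sub_sub_cancel_left, ← Int.cast_sub, ← Int.cast_sub, Complex.norm_intCast]
    _ ≤ ‖z - l‖ + ‖z - k‖ := norm_sub_le _ _
    _ = ‖z - k‖ + ‖z - l‖ := add_comm _ _

theorem one_le_abs_intCast_sub {k l : ℤ} (h : k ≠ l) : (1 : ℝ) ≤ |(k : ℝ) - l| := by
  exact_mod_cast Int.one_le_abs (sub_ne_zero.2 h)

section ConjugateProducts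

variable {K : Type*} [Field K] [NumberField K]

theorem prod_norm_embeddings_eq_abs_norm (x : 𝓞 K) :
    ∏ σ : K →ₐ[ℚ] ℂ, ‖σ x‖ = |(Algebra.norm ℤ x : ℝ)| := by
  rw [← norm_prod, ← Algebra.norm_eq_prod_embeddings, ← Algebra.coe_norm_int]
  simp

theorem one_le_prod_norm_embeddings {x : 𝓞 K} (hx : x ≠ 0) :
    1 ≤ ∏ σ : K →ₐ[ℚ] ℂ, ‖σ x‖ := by
  rw [prod_norm_embeddings_eq_abs_norm]
  exact_mod_cast Int.one_le_abs (Algebra.norm_ne_zero_iff.2 hx)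

theorem prod_norm_embeddings_eq_one {x : 𝓞 K} (hx : IsUnit x) :
    ∏ σ : K →ₐ[ℚ] ℂ, ‖σ x‖ = 1 := by
  rw [prod_norm_embeddings_eq_abs_norm]
  exact_mod_cast Int.isUnit_iff_abs_eq.1 (hx.map (Algebra.norm ℤ))

end ConjugateProducts

section Roots

variable {ι : Type*} [Fintype ι] {a : ι → ℤ} {b : ℤ}

/-- `x` is a root of the Ankeny–Brauer–Chowla polynomial with fixed nodes `a` and varying node
`b`, with the polynomial equation written out so that it makes sense over any commutative ring and
for any finite family of nodes. -/
def IsABCRoot {R : Type*} [CommRing R] (a : ι → ℤ) (b : ℤ) (x : R) : Prop :=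
  (∏ i, (x - a i)) * (x - b) = 1

namespace IsABCRoot

variable {R : Type*} [CommRing R] {x : R}

theorem map {S : Type*} [CommRing S] (φ : R →+* S) (hx : IsABCRoot a b x) :
    IsABCRoot a b (φ x) := by
  simpa [IsABCRoot] using congrArg φ hx

theorem isUnit_sub_varying (hx : IsABCRoot a b x) : IsUnit (x - b) :=
  isUnit_of_dvd_one (Dvd.intro_left _ hx)

theorem isUnit_sub_fixed (hx : IsABCRoot a b x) (i : ι) : IsUnit (x - a i) :=
  isUnit_of_dvd_one ((Finset.dvd_prod_of_mem _ (Finset.mem_univ i)).trans (Dvd.intro _ hx))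

theorem varying_unique [IsDomain R] [CharZero R] {b' : ℤ} (hx : IsABCRoot a b x)
    (hx' : IsABCRoot a b' x) : b = b' := by
  have hsub : x - b = x - b' :=
    mul_left_cancel₀ (left_ne_zero_of_mul_eq_one hx) (hx.trans hx'.symm)
  exact_mod_cast sub_right_injective hsub

/-- Near `a i` every other factor of the product is bounded below, and `z - b` is large. -/
theorem norm_sub_fixed_le {z : ℂ} {D : ℝ} (hz : IsABCRoot a b z) (ha : Function.Injective a)
    (hD : 0 < D) {i : ι} (hb : D + 1 ≤ |(b : ℝ) - a i|) (hi : ‖z - a i‖ < 1 / 2) :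
    ‖z - a i‖ ≤ 2 ^ Fintype.card ι / D := by
  have hother : ∀ j ≠ i, 1 / 2 ≤ ‖z - a j‖ := fun j hj ↦ by
    linarith [one_le_abs_intCast_sub (ha.ne hj), abs_intCast_sub_le_norm_add_norm z (a j) (a i)]
  have hfar : D ≤ ‖z - b‖ := by
    linarith [abs_intCast_sub_le_norm_add_norm z b (a i)]
  have hprod : ‖z - a i‖ * (1 / 2) ^ Fintype.card ι ≤ ∏ j, ‖z - a j‖ :=
    calc ‖z - a i‖ * (1 / 2) ^ Fintype.card ι
        ≤ ‖z - a i‖ * (1 / 2) ^ (Fintype.card ι - 1) :=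
          mul_le_mul_of_nonneg_left
            (pow_le_pow_of_le_one (by norm_num) (by norm_num) (Nat.sub_le _ _)) (norm_nonneg _)
      _ ≤ ∏ j, ‖z - a j‖ :=
          mul_pow_card_sub_one_le_prod (f := fun j ↦ ‖z - a j‖) (by norm_num) (norm_nonneg _) hother
  have hle : ‖z - a i‖ * (1 / 2) ^ Fintype.card ι * D ≤ 1 :=
    calc ‖z - a i‖ * (1 / 2) ^ Fintype.card ι * D
        ≤ (∏ j, ‖z - a j‖) * ‖z - b‖ := by gcongr
      _ = 1 := by rw [← norm_prod, ← norm_mul, hz, norm_one]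
  rw [le_div_iff₀ hD]
  calc ‖z - a i‖ * D
      = ‖z - a i‖ * (1 / 2) ^ Fintype.card ι * D * 2 ^ Fintype.card ι := by
        rw [one_div_pow]; field_simp
    _ ≤ 1 * 2 ^ Fintype.card ι := by gcongr
    _ = 2 ^ Fintype.card ι := one_mul _

end IsABCRoot

end Roots

section Labelling

variable {ι : Type*} {a : ι → ℤ} {b b' : ℤ} {K : Type*} [Field K] [NumberField K] {x x' : 𝓞 K}

/-- The embeddings of `K` are indexed by the nodes `b` and `a i` in such a way that each conjugate
of `x` is near its node. The index `none` stands for `b` and `some i` for `a i`. -/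
structure IsRootLabelling (a : ι → ℤ) (b : ℤ) (x : 𝓞 K) (e : Option ι ≃ (K →ₐ[ℚ] ℂ)) :
    Prop where
  norm_none_sub_le : ‖e none x - b‖ ≤ 1
  norm_some_sub_lt : ∀ i, ‖e (some i) x - a i‖ < 1 / 2

namespace IsRootLabelling

variable {e e' : Option ι ≃ (K →ₐ[ℚ] ℂ)}

theorem norm_none_sub_le_of_none_eq (he : IsRootLabelling a b x e)
    (he' : IsRootLabelling a b' x' e') (h : e none = e' none) {B : ℝ}
    (hb : |(b : ℝ)| ≤ B) (hb' : |(b' : ℝ)| ≤ B) : ‖e none x - e none x'‖ ≤ 2 * B + 2 := by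
  have hnear := he.norm_none_sub_le
  have hnear' := he'.norm_none_sub_le
  rw [← Complex.norm_intCast] at hb hb'
  rw [← h] at hnear'
  calc ‖e none x - e none x'‖ = ‖(e none x - b) - (e none x' - b') + (b - b')‖ := by ring_nf
    _ ≤ ‖e none x - b‖ + ‖e none x' - b'‖ + (‖(b : ℂ)‖ + ‖(b' : ℂ)‖) :=
        (norm_add_le _ _).trans (add_le_add (norm_sub_le _ _) (norm_sub_le _ _))
    _ ≤ 2 * B + 2 := by linarith

theorem norm_some_le (he : IsRootLabelling a b x e) {M : ℝ} (hM : ∀ i, |(a i : ℝ)| ≤ M) (i : ι) :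
    ‖e (some i) x‖ ≤ M + 1 / 2 := by
  have hai := hM i
  rw [← Complex.norm_intCast] at hai
  linarith [he.norm_some_sub_lt i, norm_le_norm_sub_add (e (some i) x) (a i)]

theorem norm_some_sub_le_of_none_eq (he : IsRootLabelling a b x e)
    (he' : IsRootLabelling a b' x' e') (h : e none = e' none) {M : ℝ}
    (hM : ∀ i, |(a i : ℝ)| ≤ M) (i : ι) : ‖e (some i) x - e (some i) x'‖ ≤ 2 * M + 1 := by
  obtain ⟨j, hj⟩ : ∃ j, e (some i) = e' (some j) := by
    obtain ⟨_ | j, hj⟩ := e'.surjective (e (some i))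
    · exact absurd (e.injective (h.trans hj)) (Option.some_ne_none i).symm
    · exact ⟨j, hj.symm⟩
  have hx' := he'.norm_some_le hM j
  rw [← hj] at hx'
  linarith [he.norm_some_le hM i, norm_sub_le (e (some i) x) (e (some i) x')]

end IsRootLabelling

variable [Fintype ι] {D : ℝ}

theorem IsABCRoot.embedding (hx : IsABCRoot a b x) (σ : K →ₐ[ℚ] ℂ) : IsABCRoot a b (σ x) :=
  hx.map ((σ : K →+* ℂ).comp (algebraMap (𝓞 K) K))

theorem IsABCRoot.exists_embedding_near_varying (hx : IsABCRoot a b x) :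
    ∃ σ : K →ₐ[ℚ] ℂ, ‖σ x - b‖ ≤ 1 := by
  have : Nonempty (K →ₐ[ℚ] ℂ) := ⟨IsAlgClosed.lift⟩
  obtain ⟨σ, hσ⟩ :=
    exists_le_one_of_prod_le_one (prod_norm_embeddings_eq_one (K := K) hx.isUnit_sub_varying).le
  exact ⟨σ, by simpa using hσ⟩

theorem IsABCRoot.exists_embedding_near_fixed (hx : IsABCRoot a b x)
    (hK : Module.finrank ℚ K = Fintype.card ι + 1) (hD : 2 ^ Fintype.card ι < D) {i : ι}
    (hb : D + 1 ≤ |(b : ℝ) - a i|) : ∃ σ : K →ₐ[ℚ] ℂ, ‖σ x - a i‖ < 1 / 2 := by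
  by_contra! hfar
  obtain ⟨τ, hτ⟩ := hx.exists_embedding_near_varying
  have hτD : D ≤ ‖τ x - a i‖ := by
    linarith [abs_intCast_sub_le_norm_add_norm (τ x) b (a i)]
  have hcard : Fintype.card (K →ₐ[ℚ] ℂ) - 1 = Fintype.card ι := by
    rw [AlgHom.card, hK, Nat.add_sub_cancel]
  have hlt : 1 < ∏ σ : K →ₐ[ℚ] ℂ, ‖σ x - a i‖ :=
    calc (1 : ℝ) = 2 ^ Fintype.card ι * (1 / 2) ^ Fintype.card ι := by
          rw [← mul_pow]; norm_num
      _ < ‖τ x - a i‖ * (1 / 2) ^ Fintype.card ι := by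
          gcongr
          exact hD.trans_le hτD
      _ ≤ ∏ σ : K →ₐ[ℚ] ℂ, ‖σ x - a i‖ := by
          rw [← hcard]
          exact mul_pow_card_sub_one_le_prod (f := fun σ : K →ₐ[ℚ] ℂ ↦ ‖σ x - a i‖)
            (by norm_num) (norm_nonneg _) fun σ _ ↦ hfar σ
  have heq := prod_norm_embeddings_eq_one (hx.isUnit_sub_fixed i)
  simp only [map_sub, map_intCast] at heq
  exact hlt.ne' heq

theorem IsABCRoot.exists_isRootLabelling (hx : IsABCRoot a b x) (ha : Function.Injective a)
    (hK : Module.finrank ℚ K = Fintype.card ι + 1) (hD : 2 ^ Fintype.card ι < D)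
    (hb : ∀ i, D + 1 ≤ |(b : ℝ) - a i|) :
    ∃ e : Option ι ≃ (K →ₐ[ℚ] ℂ), IsRootLabelling a b x e := by
  obtain ⟨τ, hτ⟩ := hx.exists_embedding_near_varying
  choose σ hσ using fun i ↦ hx.exists_embedding_near_fixed hK hD (hb i)
  have hD1 : 1 < D := (one_le_pow₀ one_le_two).trans_lt hD
  have hτσ : ∀ i, τ ≠ σ i := by
    rintro i rfl
    linarith [hσ i, hb i, abs_intCast_sub_le_norm_add_norm (σ i x) b (a i)]
  have hσinj : Function.Injective σ := by
    intro i j hij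
    by_contra hne
    have hj := hσ j
    rw [← hij] at hj
    linarith [hσ i, one_le_abs_intCast_sub (ha.ne hne),
      abs_intCast_sub_le_norm_add_norm (σ i x) (a i) (a j)]
  have hinj : Function.Injective fun o : Option ι ↦ o.elim τ σ := by
    rintro (_ | i) (_ | j) h
    exacts [rfl, absurd h (hτσ j), absurd h.symm (hτσ i), congrArg some (hσinj h)]
  have hcard : Fintype.card (Option ι) = Fintype.card (K →ₐ[ℚ] ℂ) := by
    rw [Fintype.card_option, AlgHom.card, hK]
  exact ⟨.ofBijective _ ((Fintype.bijective_iff_injective_and_card _).2 ⟨hinj, hcard⟩), hτ, hσ⟩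

namespace IsRootLabelling

variable {e e' : Option ι ≃ (K →ₐ[ℚ] ℂ)}

theorem norm_some_sub_le_of_some_eq (he : IsRootLabelling a b x e)
    (he' : IsRootLabelling a b' x' e') (hx : IsABCRoot a b x) (hx' : IsABCRoot a b' x')
    (ha : Function.Injective a) (hD : 0 < D) {i : ι} (hb : D + 1 ≤ |(b : ℝ) - a i|)
    (hb' : D + 1 ≤ |(b' : ℝ) - a i|) (h : e (some i) = e' (some i)) :
    ‖e (some i) x - e (some i) x'‖ ≤ 2 ^ (Fintype.card ι + 1) / D := by
  have hnear := (hx.embedding _).norm_sub_fixed_le ha hD hb (he.norm_some_sub_lt i)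
  have hnear' := (hx'.embedding _).norm_sub_fixed_le ha hD hb' (he'.norm_some_sub_lt i)
  rw [← h] at hnear'
  calc ‖e (some i) x - e (some i) x'‖
      = ‖(e (some i) x - a i) - (e (some i) x' - a i)‖ := by rw [sub_sub_sub_cancel_right]
    _ ≤ ‖e (some i) x - a i‖ + ‖e (some i) x' - a i‖ := norm_sub_le _ _
    _ ≤ 2 ^ Fintype.card ι / D + 2 ^ Fintype.card ι / D := add_le_add hnear hnear'
    _ = 2 ^ (Fintype.card ι + 1) / D := by ring

theorem eq_of_three_embeddings_eq (he : IsRootLabelling a b x e) (he' : IsRootLabelling a b' x' e')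
    (hx : IsABCRoot a b x) (hx' : IsABCRoot a b' x') (ha : Function.Injective a) (hD : 0 < D)
    (hb : ∀ i, D + 1 ≤ |(b : ℝ) - a i|) (hb' : ∀ i, D + 1 ≤ |(b' : ℝ) - a i|) {B M : ℝ}
    (hB : |(b : ℝ)| ≤ B) (hB' : |(b' : ℝ)| ≤ B) (hM : ∀ i, |(a i : ℝ)| ≤ M)
    (hsmall : (2 * B + 2) *
      ((2 ^ (Fintype.card ι + 1) / D) ^ 2 * (2 * M + 1) ^ (Fintype.card ι - 2)) < 1)
    {i j : ι} (hij : i ≠ j) (hnone : e none = e' none) (hi : e (some i) = e' (some i))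
    (hj : e (some j) = e' (some j)) : b = b' := by
  suffices hxx' : x = x' from hx.varying_unique (hxx' ▸ hx')
  by_contra hne
  have hsome : ∏ k, ‖e (some k) x - e (some k) x'‖ ≤
      (2 ^ (Fintype.card ι + 1) / D) ^ 2 * (2 * M + 1) ^ (Fintype.card ι - 2) :=
    prod_le_sq_mul_pow_card_sub_two (fun _ ↦ norm_nonneg _) hij
      (he.norm_some_sub_le_of_some_eq he' hx hx' ha hD (hb i) (hb' i) hi)
      (he.norm_some_sub_le_of_some_eq he' hx hx' ha hD (hb j) (hb' j) hj)
      (he.norm_some_sub_le_of_none_eq he' hnone hM)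
  have hlt : ∏ σ : K →ₐ[ℚ] ℂ, ‖σ x - σ x'‖ < 1 := by
    rw [← e.prod_comp, Fintype.prod_option]
    refine lt_of_le_of_lt ?_ hsmall
    exact mul_le_mul (he.norm_none_sub_le_of_none_eq he' hnone hB hB') hsome
      (Finset.prod_nonneg fun _ _ ↦ norm_nonneg _) (by linarith [abs_nonneg (b : ℝ)])
  have hge := one_le_prod_norm_embeddings (sub_ne_zero.2 hne)
  simp only [map_sub] at hge
  exact hge.not_gt hlt

end IsRootLabelling

theorem card_le_descFactorial_of_isABCRoot [Nontrivial ι] (ha : Function.Injective a)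
    (hK : Module.finrank ℚ K = Fintype.card ι + 1) {B M : ℝ} (hD : 2 ^ Fintype.card ι < D)
    (hM : ∀ i, |(a i : ℝ)| ≤ M)
    (hsmall : (2 * B + 2) *
      ((2 ^ (Fintype.card ι + 1) / D) ^ 2 * (2 * M + 1) ^ (Fintype.card ι - 2)) < 1)
    {S : Finset ℤ} (hS : ∀ b ∈ S, (∀ i, D + 1 ≤ |(b : ℝ) - a i|) ∧ |(b : ℝ)| ≤ B)
    (hroot : ∀ b ∈ S, ∃ x : 𝓞 K, IsABCRoot a b x) :
    S.card ≤ (Fintype.card ι + 1).descFactorial 3 := by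
  classical
  have hD0 : 0 < D := (by positivity : (0 : ℝ) < 2 ^ Fintype.card ι).trans hD
  choose x hx using fun b : S ↦ hroot b b.2
  choose e he using fun b : S ↦ (hx b).exists_isRootLabelling ha hK hD (hS b b.2).1
  obtain ⟨i, j, hij⟩ := exists_pair_ne ι
  have htriple : Function.Injective ![none, some i, some j] := by
    simp [Function.Injective, Fin.forall_fin_succ, hij, hij.symm]
  let record : S → Fin 3 ↪ (K →ₐ[ℚ] ℂ) := fun b ↦ ⟨_, (e b).injective.comp htriple⟩
  have hrecord : Function.Injective record := fun b b' h ↦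
    have heq (k : Fin 3) : e b (![none, some i, some j] k) = e b' (![none, some i, some j] k) :=
      DFunLike.congr_fun h k
    Subtype.ext <| (he b).eq_of_three_embeddings_eq (he b') (hx b) (hx b') ha hD0
      (hS b b.2).1 (hS b' b'.2).1 (hS b b.2).2 (hS b' b'.2).2 hM hsmall hij (heq 0) (heq 1) (heq 2)
  simpa [Fintype.card_embedding_eq, AlgHom.card, hK] using
    Fintype.card_le_of_injective record hrecord

end Labelling

section Schur

variable {κ : Type*} [Fintype κ]

theorem natDegree_prod_X_sub_C_sub_one {R : Type*} [CommRing R] [Nontrivial R] (c : κ → R) :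
    (∏ k, (X - C (c k)) - 1 : R[X]).natDegree = Fintype.card κ := by
  rw [← C_1, natDegree_sub_C, natDegree_finsetProd_X_sub_C_eq_card, Finset.card_univ]

variable [Nonempty κ]

theorem monic_prod_X_sub_C_sub_one {R : Type*} [CommRing R] (c : κ → R) :
    (∏ k, (X - C (c k)) - 1 : R[X]).Monic := by
  nontriviality R
  refine (monic_prod_X_sub_C c _).sub_of_left ?_
  rw [degree_one, ← natDegree_pos_iff_degree_pos, natDegree_finsetProd_X_sub_C_eq_card]
  exact Finset.card_pos.2 Finset.univ_nonempty

/-- In a factorization `f * g`, the values of `f` and `g` at each `c k` are `1` and `-1` in some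
order, so `f + g` has more roots than its degree allows. -/
theorem irreducible_prod_X_sub_C_sub_one {c : κ → ℤ} (hc : Function.Injective c) :
    Irreducible (∏ k, (X - C (c k)) - 1 : ℤ[X]) := by
  have hmonic := monic_prod_X_sub_C_sub_one c
  have hdeg := natDegree_prod_X_sub_C_sub_one c
  have hne_one : (∏ k, (X - C (c k)) - 1 : ℤ[X]) ≠ 1 := by
    intro h
    rw [h, natDegree_one] at hdeg
    exact Fintype.card_ne_zero hdeg.symm
  rw [hmonic.irreducible_iff_natDegree]
  refine ⟨hne_one, fun f g hf hg hfg ↦ ?_⟩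
  by_contra! hpos
  have hroot : ∀ k, (f + g).eval (c k) = 0 := by
    intro k
    have hmul : f.eval (c k) * g.eval (c k) = -1 := by
      rw [← eval_mul, hfg, eval_sub, eval_prod, Finset.prod_eq_zero (Finset.mem_univ k) (by simp)]
      simp
    rw [eval_add]
    rcases Int.mul_eq_neg_one_iff_eq_one_or_neg_one.1 hmul with ⟨h₁, h₂⟩ | ⟨h₁, h₂⟩ <;>
      simp [h₁, h₂]
  have hsum : f + g = 0 := by
    refine eq_zero_of_natDegree_lt_card_of_eval_eq_zero _ hc hroot ?_
    have hadd : f.natDegree + g.natDegree = Fintype.card κ := by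
      rw [← hf.natDegree_mul hg, hfg, hdeg]
    have hle := natDegree_add_le f g
    omega
  have hlead : (1 : ℤ) = -1 :=
    calc (1 : ℤ) = f.leadingCoeff := hf.leadingCoeff.symm
      _ = -g.leadingCoeff := by rw [eq_neg_of_add_eq_zero_left hsum, leadingCoeff_neg]
      _ = -1 := by rw [hg.leadingCoeff]
  norm_num at hlead

end Schur

section Polynomials

variable {n : ℕ} {a : Fin (n - 1) → ℤ} {b : ℤ}

theorem abcPolyZ_eq_prod_option (a : Fin (n - 1) → ℤ) (b : ℤ) :
    abcPolyZ n a b = ∏ o : Option (Fin (n - 1)), (X - C (o.elim b a)) - 1 := by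
  rw [abcPolyZ, Fintype.prod_option, mul_comm]
  rfl

theorem monic_abcPolyZ (a : Fin (n - 1) → ℤ) (b : ℤ) : (abcPolyZ n a b).Monic := by
  rw [abcPolyZ_eq_prod_option]
  exact monic_prod_X_sub_C_sub_one _

theorem natDegree_abcPolyQ (a : Fin (n - 1) → ℤ) (b : ℤ) :
    (abcPolyQ n a b).natDegree = n - 1 + 1 := by
  rw [abcPolyQ, (monic_abcPolyZ a b).natDegree_map, abcPolyZ_eq_prod_option,
    natDegree_prod_X_sub_C_sub_one, Fintype.card_option, Fintype.card_fin]

theorem irreducible_abcPolyQ (ha : Function.Injective a) (hb : ∀ i, b ≠ a i) :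
    Irreducible (abcPolyQ n a b) := by
  refine ((monic_abcPolyZ a b).irreducible_iff_irreducible_map_fraction_map (K := ℚ)).1 ?_
  rw [abcPolyZ_eq_prod_option]
  refine irreducible_prod_X_sub_C_sub_one ?_
  rintro (_ | i) (_ | j) h
  exacts [rfl, absurd h (hb j), absurd h.symm (hb i), congrArg some (ha h)]

theorem finrank_adjoinRoot_abcPolyQ (ha : Function.Injective a) (hb : ∀ i, b ≠ a i) :
    Module.finrank ℚ (AdjoinRoot (abcPolyQ n a b)) = n - 1 + 1 := by
  rw [(AdjoinRoot.powerBasis (irreducible_abcPolyQ ha hb).ne_zero).finrank,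
    AdjoinRoot.powerBasis_dim, natDegree_abcPolyQ]

theorem isABCRoot_iff_aeval_eq_zero {R : Type*} [CommRing R] {x : R} :
    IsABCRoot a b x ↔ aeval x (abcPolyZ n a b) = 0 := by
  simp [IsABCRoot, abcPolyZ, sub_eq_zero]

theorem exists_isABCRoot_of_ringHom {K : Type*} [Field K]
    (φ : AdjoinRoot (abcPolyQ n a b) →+* K) : ∃ x : 𝓞 K, IsABCRoot a b x := by
  have hroot : IsABCRoot a b (AdjoinRoot.root (abcPolyQ n a b)) := by
    rw [isABCRoot_iff_aeval_eq_zero, aeval_def, ← AdjoinRoot.eval₂_root (abcPolyQ n a b),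
      abcPolyQ, eval₂_map]
    congr
  have hφ := isABCRoot_iff_aeval_eq_zero.1 (hroot.map φ)
  have hint : IsIntegral ℤ (φ (AdjoinRoot.root (abcPolyQ n a b))) :=
    ⟨abcPolyZ n a b, monic_abcPolyZ a b, by rwa [← aeval_def]⟩
  obtain ⟨x, hx⟩ := (IsIntegralClosure.isIntegral_iff (A := 𝓞 K)).1 hint
  rw [← hx, aeval_algebraMap_eq_zero_iff] at hφ
  exact ⟨x, isABCRoot_iff_aeval_eq_zero.2 hφ⟩

end Polynomials

/-- The second factor of the last bound is `O(A⁻²)`, so `B` may be as large as a small multiple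
of `A ^ 2`. -/
theorem exists_threshold_mul_pow_lt_one (m : ℕ) {M : ℝ} (hM : 0 ≤ M) :
    ∃ A₀ : ℝ, 0 < A₀ ∧ ∀ A : ℝ, A₀ ≤ A →
      2 * M + 2 ≤ A ∧ 2 ^ m < A / 2 ∧ ∀ B : ℝ, A₀ * B ≤ A ^ 2 →
        (2 * B + 2) * ((2 ^ (m + 1) / (A / 2)) ^ 2 * (2 * M + 1) ^ (m - 2)) < 1 := by
  set c : ℝ := (2 ^ (m + 2)) ^ 2 * (2 * M + 1) ^ (m - 2) with hc
  have hc0 : 0 < c := by positivity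
  have hpow : (0 : ℝ) < 2 ^ m := by positivity
  refine ⟨2 * M + 2 + 2 * 2 ^ m + 4 * c, by positivity, fun A hA ↦ ?_⟩
  refine ⟨by linarith, by linarith, fun B hB ↦ ?_⟩
  have hA0 : 0 < A := by linarith
  have hfactor : (2 ^ (m + 1) / (A / 2)) ^ 2 * (2 * M + 1) ^ (m - 2) = c / A ^ 2 := by
    rw [hc]
    field_simp
    ring
  have hBc : (2 * B + 2) * c < A ^ 2 := by
    have hcA : 4 * c < A ^ 2 := by nlinarith
    have hcB : 4 * c * B ≤ A ^ 2 := by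
      rcases le_total B 0 with hB0 | hB0
      · nlinarith
      · exact (mul_le_mul_of_nonneg_right (by linarith) hB0).trans hB
    linarith
  rwa [hfactor, ← mul_div_assoc, div_lt_one (by positivity)]

theorem half_add_one_le_abs_sub {A M s t : ℝ} (hA : 2 * M + 2 ≤ A) (hs : |s| ≤ M) (ht : A ≤ |t|) :
    A / 2 + 1 ≤ |t - s| := by
  linarith [abs_sub_abs_le_abs_sub t s]

theorem abc_fields_rarely_isomorphic_general (n : ℕ) (hn : 3 ≤ n)
    (a : Fin (n - 1) → ℤ) (hinj : Function.Injective a) :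
    ∃ A₀ : ℝ, 0 < A₀ ∧
      ∀ A : ℝ, A₀ ≤ A →
        ∀ S : Finset ℤ,
          (∀ b ∈ S, A ≤ |(b : ℝ)| ∧ A₀ * |(b : ℝ)| ≤ A ^ 2) →
          (∀ b ∈ S, ∀ b' ∈ S,
            Nonempty (AdjoinRoot (abcPolyQ n a b) →+* AdjoinRoot (abcPolyQ n a b'))) →
          S.card ≤ n * (n - 1) * (n - 2) := by
  have hM (i) : |(a i : ℝ)| ≤ ∑ j, |(a j : ℝ)| :=
    Finset.single_le_sum (f := fun j ↦ |(a j : ℝ)|) (fun _ _ ↦ abs_nonneg _) (Finset.mem_univ i)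
  obtain ⟨A₀, hA₀, hthreshold⟩ := exists_threshold_mul_pow_lt_one (n - 1)
    (Finset.sum_nonneg fun j _ ↦ abs_nonneg (a j : ℝ))
  refine ⟨A₀, hA₀, fun A hA S hS hhom ↦ ?_⟩
  obtain ⟨hMA, hDA, hsmall⟩ := hthreshold A hA
  obtain rfl | ⟨b₀, hb₀⟩ := S.eq_empty_or_nonempty
  · simp
  have hfar : ∀ b ∈ S, ∀ i, A / 2 + 1 ≤ |(b : ℝ) - a i| := fun b hb i ↦
    half_add_one_le_abs_sub hMA (hM i) (hS b hb).1
  have hne : ∀ i, b₀ ≠ a i := by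
    rintro i rfl
    have := hfar _ hb₀ i
    rw [sub_self, abs_zero] at this
    linarith
  have : Fact (Irreducible (abcPolyQ n a b₀)) := ⟨irreducible_abcPolyQ hinj hne⟩
  have : Nontrivial (Fin (n - 1)) := Fin.nontrivial_iff_two_le.2 (by omega)
  have hcard := card_le_descFactorial_of_isABCRoot (K := AdjoinRoot (abcPolyQ n a b₀))
    (B := A ^ 2 / A₀) hinj (by simpa using finrank_adjoinRoot_abcPolyQ hinj hne)
    (by simpa using hDA) hM (by simpa using hsmall _ (mul_div_cancel₀ _ hA₀.ne').le)
    (fun b hb ↦ ⟨hfar b hb, (le_div_iff₀' hA₀).2 (hS b hb).2⟩)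
    (fun b hb ↦ exists_isABCRoot_of_ringHom (hhom b hb b₀ hb₀).some)
  have hdesc : n.descFactorial 3 = n * (n - 1) * (n - 2) := by
    simp only [Nat.descFactorial, mul_one, tsub_zero]
    ring
  rwa [Fintype.card_fin, Nat.sub_add_cancel (by omega), hdesc] at hcard

/-- **Proposition 4.2 (Sprindzhuk).**  For `A` sufficiently large, if `S` is a set of
integers `a` with `A ≤ |a| ≤ 2A` such that the Ankeny–Brauer–Chowla fields `K_a`,
`a ∈ S`, are pairwise isomorphic, then `|S| ≤ n(n−1)(n−2)`. -/
theorem abc_fields_rarely_isomorphic (n : ℕ) (hn : 3 ≤ n)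
    (a : Fin (n - 1) → ℤ) (hinj : Function.Injective a) :
    ∃ A₀ : ℝ, 0 < A₀ ∧
      ∀ A : ℝ, A₀ ≤ A →
        ∀ S : Finset ℤ,
          (∀ b ∈ S, (∀ i, b ≠ a i) ∧ A ≤ |(b : ℝ)| ∧ |(b : ℝ)| ≤ 2 * A) →
          (∀ b ∈ S, ∀ b' ∈ S,
            Nonempty (AdjoinRoot (abcPolyQ n a b) ≃+* AdjoinRoot (abcPolyQ n a b'))) →
          S.card ≤ n * (n - 1) * (n - 2) := by
  obtain ⟨A₀, hA₀, hbound⟩ := abc_fields_rarely_isomorphic_general n hn a hinj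
  exact ⟨2 * A₀, by positivity, fun A hA S hS hiso ↦ hbound A (by linarith) S
    (fun b hb ↦ ⟨(hS b hb).2.1, by nlinarith [(hS b hb).2.2]⟩)
    fun b hb b' hb' ↦ (hiso b hb b' hb').map RingEquiv.toRingHom⟩
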